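/- arXiv:2010.15351 — 3 statements merged into one kernel-verified Lean document; each statement's English description precedes it below -/
import Mathlib

section
/- Fix N ∈ ℕ^d and let Ĉ^[N] be the copula estimator built from data x_1,…,x_n ∈ ℝ^d with the convention coefficients. Then for all u ∈ [0,1]^d: (i) if at least one coordinate of u equals 0 then Ĉ^[N](u) = 0; (ii) if u = (1,…,1,u_i,1,…,1) (all coordinates equal 1 except possibly the i-th) then Ĉ^[N](u) = u_i; (iii) if N = 0 then Ĉ^[0](u) = ∏_{j=1}^d u_j. -/
/-!
Writing `P_m` for `legP m`, everything rests on `∫₀¹ Q_m = 0` for `m ≥ 1`. The two derivative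
identities `P'_{m+1} = x P'_m + (m+1) P_m` and `x P'_{m+1} - P'_m = (m+1) P_{m+1}` follow by
simultaneous induction from the three-term recurrence (`deriv_legP_rec`), and together they give
`P'_{m+2} - P'_m = (2m+3) P_{m+1}`. So `P_{m+2} - P_m` is, up to a constant, an antiderivative of
`P_{m+1}`, and it vanishes at both endpoints because `P_m(1) = 1` and `P_m(-1) = (-1)^m`.

If some `u_j = 0`, each term of the estimator has a zero factor. If `u_j = 1` for all `j ≠ i`,
only `m = 0` contributes: a nonzero `m` with exactly one nonzero component has coefficient zero by
convention, and one with at least two has a nonzero component at some `j ≠ i`, where the factor is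
`∫₀¹ Q_{m_j} = 0`. The term `m = 0` is `∏ u_j`, and it is the only one when `N = 0`.
-/

open MeasureTheory Filter

/-- Classical Legendre polynomials: `L₀ = 1`, `L₁ x = x`,
`(m+2) L_{m+2} x = (2m+3) x L_{m+1} x - (m+1) L_m x`. -/
noncomputable def legP : ℕ → ℝ → ℝ
  | 0, _ => 1
  | 1, x => x
  | m + 2, x =>
      ((2 * (m : ℝ) + 3) * x * legP (m + 1) x - ((m : ℝ) + 1) * legP m x) / ((m : ℝ) + 2)

/-- Shifted orthonormal Legendre polynomial on `[0,1]`: `Q m x = √(2m+1) · L_m (2x-1)`. -/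
noncomputable def Q (m : ℕ) (x : ℝ) : ℝ := Real.sqrt (2 * (m : ℝ) + 1) * legP m (2 * x - 1)

/-- Tensor products of shifted Legendre polynomials, indexed by multi-indices. -/
noncomputable def Qd {d : ℕ} (m : Fin d → ℕ) (u : Fin d → ℝ) : ℝ := ∏ j, Q (m j) (u j)

/-- Lebesgue measure on the cube `[0,1]^d`. -/
noncomputable def cube (d : ℕ) : Measure (Fin d → ℝ) :=
  Measure.pi fun _ => volume.restrict (Set.Icc (0 : ℝ) 1)

/-- Empirical CDF of the sample `v : Fin n → ℝ`. -/
noncomputable def empCDF (n : ℕ) (v : Fin n → ℝ) (t : ℝ) : ℝ :=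
  (1 / (n : ℝ)) * ∑ i, if v i ≤ t then (1 : ℝ) else 0

/-- Estimated copula coefficients with the conventions: `ρ̂_0 = 1`, `ρ̂_m = 0` if exactly
`d-1` components of `m` are zero, and otherwise
`ρ̂_m = (1/n) Σ_i ∏_j Q_{m_j}(F̂_j(x_{ij}))`. -/
noncomputable def rhoHat (d n : ℕ) (x : Fin n → Fin d → ℝ) (m : Fin d → ℕ) : ℝ :=
  if m = 0 then 1
  else if (Finset.univ.filter fun j => m j = 0).card = d - 1 then 0
  else (1 / (n : ℝ)) * ∑ i, ∏ j, Q (m j) (empCDF n (fun k => x k j) (x i j))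

/-- The copula estimator `Ĉ^[N](u) = Σ_{m ≤ N} ρ̂_m ∏_j ∫_0^{u_j} Q_{m_j}`. -/
noncomputable def copEst (d n : ℕ) (x : Fin n → Fin d → ℝ) (N : Fin d → ℕ)
    (u : Fin d → ℝ) : ℝ :=
  ∑ m ∈ Fintype.piFinset fun j => Finset.range (N j + 1),
    rhoHat d n x m * ∏ j, ∫ t in (0 : ℝ)..(u j), Q (m j) t

lemma legP_succ_succ (m : ℕ) (x : ℝ) : legP (m + 2) x =
    ((2 * (m : ℝ) + 3) * x * legP (m + 1) x - ((m : ℝ) + 1) * legP m x) / ((m : ℝ) + 2) := by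
  rw [legP]

lemma differentiable_legP (m : ℕ) : Differentiable ℝ (legP m) := by
  induction m using Nat.twoStepInduction with
  | zero =>
    have h : legP 0 = fun _ => 1 := by funext x; rw [legP]
    rw [h]; fun_prop
  | one =>
    have h : legP 1 = fun x => x := by funext x; rw [legP]
    rw [h]; fun_prop
  | more m h0 h1 =>
    rw [funext (legP_succ_succ m)]; fun_prop

lemma deriv_legP_succ_succ (m : ℕ) (x : ℝ) : ((m : ℝ) + 2) * deriv (legP (m + 2)) x =
    (2 * (m : ℝ) + 3) * (legP (m + 1) x + x * deriv (legP (m + 1)) x)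
      - ((m : ℝ) + 1) * deriv (legP m) x := by
  have h0 := (differentiable_legP m x).hasDerivAt
  have h1 := (differentiable_legP (m + 1) x).hasDerivAt
  have h := ((((hasDerivAt_id' x).const_mul (2 * (m : ℝ) + 3)).mul h1).sub
    (h0.const_mul ((m : ℝ) + 1))).div_const ((m : ℝ) + 2)
  have h2 : HasDerivAt (legP (m + 2)) _ x :=
    h.congr_of_eventuallyEq (Eventually.of_forall (legP_succ_succ m))
  rw [h2.deriv]
  have : (m : ℝ) + 2 ≠ 0 := by positivity
  field_simp

/-- The two first-order derivative identities are proved together: the first at `m + 1` uses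
the second at `m`, and the second at `m + 1` uses both at `m`. -/
lemma deriv_legP_rec (m : ℕ) (x : ℝ) :
    deriv (legP (m + 1)) x = x * deriv (legP m) x + ((m : ℝ) + 1) * legP m x ∧
    x * deriv (legP (m + 1)) x - deriv (legP m) x = ((m : ℝ) + 1) * legP (m + 1) x := by
  induction m with
  | zero =>
    have h0 : legP 0 = fun _ => 1 := by funext x; rw [legP]
    have h1 : legP 1 = fun x => x := by funext x; rw [legP]
    simp [h0, h1]
  | succ m ih =>
    obtain ⟨hA, hB⟩ := ih
    have hm : (m : ℝ) + 2 ≠ 0 := by positivity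
    have hD := deriv_legP_succ_succ m x
    have hP : ((m : ℝ) + 2) * legP (m + 2) x =
        (2 * (m : ℝ) + 3) * x * legP (m + 1) x - ((m : ℝ) + 1) * legP m x := by
      rw [legP_succ_succ]; field_simp
    have hA' : deriv (legP (m + 2)) x
        = x * deriv (legP (m + 1)) x + ((m : ℝ) + 2) * legP (m + 1) x := by
      apply mul_left_cancel₀ hm
      linear_combination hD + ((m : ℝ) + 1) * hB
    push_cast
    refine ⟨by linear_combination hA', ?_⟩
    linear_combination x * hA' - hP + x * hB - hA

lemma deriv_legP_sub (m : ℕ) (x : ℝ) :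
    deriv (legP (m + 2)) x - deriv (legP m) x = (2 * (m : ℝ) + 3) * legP (m + 1) x := by
  have hA := (deriv_legP_rec (m + 1) x).1
  have hB := (deriv_legP_rec m x).2
  push_cast at hA
  linear_combination hA + hB

lemma legP_one (m : ℕ) : legP m 1 = 1 := by
  induction m using Nat.twoStepInduction with
  | zero => rw [legP]
  | one => rw [legP]
  | more m h0 h1 =>
    rw [legP_succ_succ, h0, h1]
    field_simp
    ring

lemma legP_neg_one (m : ℕ) : legP m (-1) = (-1) ^ m := by
  induction m using Nat.twoStepInduction with
  | zero => simp [legP]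
  | one => simp [legP]
  | more m h0 h1 =>
    rw [legP_succ_succ, h0, h1]
    field_simp
    ring

/-- Orthogonality of the nonconstant shifted Legendre polynomials to the constants. -/
lemma integral_Q_eq_zero {m : ℕ} (hm : m ≠ 0) : ∫ t in (0 : ℝ)..1, Q m t = 0 := by
  obtain ⟨m, rfl⟩ := Nat.exists_eq_succ_of_ne_zero hm
  simp only [Q, Nat.succ_eq_add_one]
  rw [intervalIntegral.integral_const_mul]
  have hlin : ∀ t : ℝ, HasDerivAt (fun t : ℝ => 2 * t - 1) 2 t := fun t => by
    simpa using ((hasDerivAt_id' t).const_mul 2).sub_const 1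
  have hF : ∀ t : ℝ, HasDerivAt
      (fun t : ℝ => (legP (m + 2) (2 * t - 1) - legP m (2 * t - 1)) / (2 * (2 * (m : ℝ) + 3)))
      (legP (m + 1) (2 * t - 1)) t := fun t => by
    have h2 := (differentiable_legP (m + 2) (2 * t - 1)).hasDerivAt.comp t (hlin t)
    have h0 := (differentiable_legP m (2 * t - 1)).hasDerivAt.comp t (hlin t)
    refine ((h2.sub h0).div_const (2 * (2 * (m : ℝ) + 3))).congr_deriv ?_
    rw [← sub_mul, deriv_legP_sub]
    field_simp
  have hc : Continuous fun t : ℝ => legP (m + 1) (2 * t - 1) :=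
    (differentiable_legP (m + 1)).continuous.comp (by fun_prop)
  rw [intervalIntegral.integral_eq_sub_of_hasDerivAt (fun t _ => hF t)
    (hc.intervalIntegrable 0 1)]
  norm_num [legP_one, legP_neg_one, pow_add]

lemma integral_Q_zero (a : ℝ) : ∫ t in (0 : ℝ)..a, Q 0 t = a := by
  simp [Q, legP]

/-- The summand of `copEst` at `m = 0` is the independence copula. -/
lemma copEst_term_zero (d n : ℕ) (x : Fin n → Fin d → ℝ) (u : Fin d → ℝ) :
    rhoHat d n x 0 * ∏ j, ∫ t in (0 : ℝ)..(u j), Q ((0 : Fin d → ℕ) j) t = ∏ j, u j := by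
  simp [rhoHat, integral_Q_zero]

/-- The coefficient convention leaves only nonzero multi-indices with at least two nonzero
components, so one of those components lies away from any prescribed position `i`. -/
lemma exists_ne_of_rhoHat_ne_zero {d n : ℕ} {x : Fin n → Fin d → ℝ} {m : Fin d → ℕ}
    (hm : m ≠ 0) (h : rhoHat d n x m ≠ 0) (i : Fin d) : ∃ j, j ≠ i ∧ m j ≠ 0 := by
  by_contra! hall
  have hi : m i ≠ 0 := fun hi => hm <| funext fun j => by
    by_cases hj : j = i
    · rw [hj]; exact hi
    · exact hall j hj
  have hset : (Finset.univ.filter fun j => m j = 0) = Finset.univ.erase i := by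
    ext j
    simp only [Finset.mem_filter, Finset.mem_univ, true_and, Finset.mem_erase, and_true]
    exact ⟨fun hj hji => hi (hji ▸ hj), hall j⟩
  apply h
  rw [rhoHat, if_neg hm, if_pos]
  rw [hset, Finset.card_erase_of_mem (Finset.mem_univ i), Finset.card_univ, Fintype.card_fin]

/-- elementary properties of the copula estimator `Ĉ^[N]`:
(i) it vanishes as soon as one coordinate of `u` is `0`;
(ii) if all coordinates except possibly the `i`-th equal `1`, its value is `u i`;
(iii) for `N = 0` it is the independence copula `∏_j u_j`. -/
theorem copEst_props (d n : ℕ) (hn : 0 < n) (x : Fin n → Fin d → ℝ) (N : Fin d → ℕ)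
    (u : Fin d → ℝ) (hu : ∀ j, u j ∈ Set.Icc (0 : ℝ) 1) :
    ((∃ j, u j = 0) → copEst d n x N u = 0)
    ∧ (∀ i : Fin d, (∀ j, j ≠ i → u j = 1) → copEst d n x N u = u i)
    ∧ (N = 0 → copEst d n x N u = ∏ j, u j) := by
  refine ⟨?_, ?_, ?_⟩
  · rintro ⟨j, hj⟩
    refine Finset.sum_eq_zero fun m _ => ?_
    rw [Finset.prod_eq_zero (Finset.mem_univ j), mul_zero]
    rw [hj, intervalIntegral.integral_same]
  · intro i hi
    rw [copEst, Finset.sum_eq_single (0 : Fin d → ℕ), copEst_term_zero]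
    · exact Finset.prod_eq_single i (fun j _ hj => hi j hj) (by simp)
    · intro m _ hm
      by_cases hr : rhoHat d n x m = 0
      · rw [hr, zero_mul]
      · obtain ⟨j, hji, hj⟩ := exists_ne_of_rhoHat_ne_zero hm hr i
        rw [Finset.prod_eq_zero (Finset.mem_univ j), mul_zero]
        rw [hi j hji, integral_Q_eq_zero hj]
    · simp
  · rintro rfl
    rw [copEst, Finset.sum_eq_single (0 : Fin d → ℕ), copEst_term_zero]
    · intro m hmem hm
      refine absurd (funext fun j => ?_) hm
      simpa using Fintype.mem_piFinset.mp hmem j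
    · exact fun h => absurd (Fintype.mem_piFinset.mpr fun j => by simp) h
end

section
/- Fix N ∈ ℕ^d and let ĉ^[N] be the copula density estimator built from data x_1,…,x_n ∈ ℝ^d with the convention coefficients. Then: (i) ∫_{[0,1]^d} ĉ^[N](u) du = 1; (ii) for every j ∈ {1,…,d} and every u_j ∈ [0,1], integrating ĉ^[N] over all coordinates except the j-th (i.e. ∫_{[0,1]^{d−1}} ĉ^[N](x_1,…,x_{j−1},u_j,x_{j+1},…,x_d) dx_1⋯dx_{j−1}dx_{j+1}⋯dx_d) gives 1; (iii) if N = 0 then ĉ^[0](u) = 1 for all u ∈ [0,1]^d. -/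
/-!
Everything rests on `∫₀¹ Q m = 0` for `m ≥ 1` (`integral_Q_succ`). The Legendre recurrence yields
`L'_{m+2} - L'_m = (2m+3) L_{m+1}` (`legP_hasDerivAt`), while `L_{m+2}` and `L_m` agree at `±1`
(`legP_one`, `legP_neg_one`), so `L_{m+1}` integrates to zero over `[-1,1]`.

By Fubini the integral of a tensor product `Q_m` over the cube is a product of one-dimensional
integrals. Hence integrating out every coordinate but the `j`-th kills each `Q_m` having a nonzero
index away from `j`. The surviving multi-indices are `m = 0`, which contributes `1`, and those
whose only nonzero index is the `j`-th, whose coefficient is zero by convention. The full integral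
is the same computation with no coordinate held fixed, and there only `m = 0` survives.
-/

open MeasureTheory Filter

/-- The copula density estimator `ĉ^[N](u) = Σ_{m ≤ N} ρ̂_m Q_m(u)`. -/
noncomputable def densEst (d n : ℕ) (x : Fin n → Fin d → ℝ) (N : Fin d → ℕ)
    (u : Fin d → ℝ) : ℝ :=
  ∑ m ∈ Fintype.piFinset fun j => Finset.range (N j + 1), rhoHat d n x m * Qd m u

/-- The classical identities `L'_{m+1} = x L'_m + (m+1) L_m` and `x L'_{m+1} - L'_m = (m+1) L_{m+1}`,
proved jointly by induction since each step of one uses the other. -/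
lemma legP_deriv_aux (x : ℝ) (m : ℕ) : ∃ a b : ℝ,
    HasDerivAt (legP m) a x ∧ HasDerivAt (legP (m + 1)) b x ∧
    b = x * a + ((m : ℝ) + 1) * legP m x ∧ x * b - a = ((m : ℝ) + 1) * legP (m + 1) x := by
  induction m with
  | zero =>
    refine ⟨0, 1, ?_, ?_, ?_, ?_⟩
    · have : legP 0 = fun _ => (1 : ℝ) := by funext y; simp [legP]
      rw [this]; exact hasDerivAt_const x 1
    · have : legP (0 + 1) = fun y : ℝ => y := by funext y; simp [legP]
      rw [this]; exact hasDerivAt_id x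
    · simp [legP]
    · simp [legP]
  | succ m ih =>
    obtain ⟨a, b, ha, hb, h1, h2⟩ := ih
    have hm : (m : ℝ) + 2 ≠ 0 := by positivity
    have hL : ((m : ℝ) + 2) * legP (m + 2) x
        = (2 * (m : ℝ) + 3) * x * legP (m + 1) x - ((m : ℝ) + 1) * legP m x := by
      rw [legP]; field_simp
    refine ⟨b, x * b + ((m : ℝ) + 2) * legP (m + 1) x, hb, ?_, ?_, ?_⟩
    · have hfun : legP (m + 1 + 1) = fun y : ℝ =>
          ((2 * (m : ℝ) + 3) * y * legP (m + 1) y - ((m : ℝ) + 1) * legP m y) / ((m : ℝ) + 2) := by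
        funext y; rw [legP]
      rw [hfun]
      have hd := (((((hasDerivAt_id x).const_mul (2 * (m : ℝ) + 3)).mul hb).sub
        (ha.const_mul ((m : ℝ) + 1))).div_const ((m : ℝ) + 2))
      refine hd.congr_deriv ?_
      simp only [id]
      rw [div_eq_iff hm]
      linear_combination ((m : ℝ) + 1) * h2
    · push_cast; ring
    · push_cast
      linear_combination x * h2 - h1 - hL

lemma legP_hasDerivAt (x : ℝ) (m : ℕ) :
    HasDerivAt (fun y => legP (m + 2) y - legP m y) ((2 * (m : ℝ) + 3) * legP (m + 1) x) x := by
  obtain ⟨a, b, ha, hb, -, h2⟩ := legP_deriv_aux x m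
  obtain ⟨a', b', ha', hb', h1, -⟩ := legP_deriv_aux x (m + 1)
  have haa : a' = b := ha'.unique hb
  refine (hb'.sub ha).congr_deriv ?_
  push_cast at h1
  rw [h1, haa]
  linear_combination h2

lemma legP_continuous (m : ℕ) : Continuous (legP m) := by
  refine continuous_iff_continuousAt.2 fun x => ?_
  obtain ⟨a, _, ha, _⟩ := legP_deriv_aux x m
  exact ha.continuousAt

lemma integral_legP_succ (m : ℕ) : ∫ x in (-1 : ℝ)..1, legP (m + 1) x = 0 := by
  have h := intervalIntegral.integral_eq_sub_of_hasDerivAt (a := (-1 : ℝ)) (b := 1)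
    (fun x _ => legP_hasDerivAt x m)
    ((continuous_const.mul (legP_continuous (m + 1))).intervalIntegrable _ _)
  rw [intervalIntegral.integral_const_mul] at h
  simp only [legP_one, legP_neg_one] at h
  have hm : (2 * (m : ℝ) + 3) ≠ 0 := by positivity
  refine (mul_eq_zero.1 (h.trans ?_)).resolve_left hm
  ring

lemma Q_zero (x : ℝ) : Q 0 x = 1 := by simp [Q, legP]

lemma Q_continuous (m : ℕ) : Continuous (Q m) :=
  continuous_const.mul ((legP_continuous m).comp (by fun_prop))

lemma integral_Q_succ (m : ℕ) : ∫ x in Set.Icc (0 : ℝ) 1, Q (m + 1) x = 0 := by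
  rw [integral_Icc_eq_integral_Ioc, ← intervalIntegral.integral_of_le zero_le_one]
  simp only [Q]
  rw [intervalIntegral.integral_const_mul,
    intervalIntegral.integral_comp_mul_sub (fun y => legP (m + 1) y) (two_ne_zero) 1]
  have h := integral_legP_succ m
  norm_num [h]

lemma integral_Q (m : ℕ) :
    ∫ x in Set.Icc (0 : ℝ) 1, Q m x = if m = 0 then 1 else 0 := by
  cases m with
  | zero => simp [Q_zero]
  | succ m => simpa using integral_Q_succ m

lemma integrable_cube_prod {d : ℕ} (g : Fin d → ℝ → ℝ) (hg : ∀ i, Continuous (g i)) :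
    Integrable (fun u : Fin d → ℝ => ∏ i, g i (u i)) (cube d) :=
  Integrable.fintype_prod fun i => (hg i).continuousOn.integrableOn_Icc

lemma integral_cube_prod {d : ℕ} (g : Fin d → ℝ → ℝ) :
    ∫ u : Fin d → ℝ, ∏ i, g i (u i) ∂cube d = ∏ i, ∫ t in Set.Icc (0 : ℝ) 1, g i t :=
  integral_fintype_prod_eq_prod g

/-- With coordinate `j` held at `t`, the tensor product `Q_m` is still a product of one-variable
functions, the `j`-th one being constant. -/
lemma Qd_update {d : ℕ} (m : Fin d → ℕ) (v : Fin d → ℝ) (j : Fin d) (t : ℝ) :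
    Qd m (Function.update v j t)
      = ∏ i, (if i = j then fun _ => Q (m j) t else Q (m i)) (v i) := by
  refine Finset.prod_congr rfl fun i _ => ?_
  by_cases h : i = j
  · subst h; simp
  · simp [h]

/-- A sum over the multi-indices `m ≤ N` reduces to its `m = 0` term. -/
lemma sum_multiIndex {d : ℕ} (N : Fin d → ℕ) (f : (Fin d → ℕ) → ℝ) (h0 : f 0 = 1)
    (h : ∀ m, m ≠ 0 → f m = 0) :
    ∑ m ∈ Fintype.piFinset (fun j => Finset.range (N j + 1)), f m = 1 := by
  rw [Finset.sum_eq_single 0 (fun m _ hm => h m hm) (fun hn => absurd (by simp) hn), h0]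

lemma rhoHat_zero (d n : ℕ) (x : Fin n → Fin d → ℝ) : rhoHat d n x 0 = 1 := by simp [rhoHat]

lemma rhoHat_eq_zero_of_single {d n : ℕ} (x : Fin n → Fin d → ℝ) {m : Fin d → ℕ} (hm : m ≠ 0)
    {j : Fin d} (hj : ∀ i, i ≠ j → m i = 0) : rhoHat d n x m = 0 := by
  have hmj : m j ≠ 0 := fun h => hm (funext fun i => by
    by_cases hi : i = j
    · rw [hi]; exact h
    · exact hj i hi)
  have hf : (Finset.univ.filter fun i => m i = 0) = Finset.univ.erase j := by
    ext i
    simp only [Finset.mem_filter, Finset.mem_univ, true_and, Finset.mem_erase, and_true]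
    exact ⟨fun h hi => hmj (hi ▸ h), hj i⟩
  rw [rhoHat, if_neg hm, if_pos]
  rw [hf, Finset.card_erase_of_mem (Finset.mem_univ j), Finset.card_univ, Fintype.card_fin]

/-- the copula density estimator `ĉ^[N]` (i) integrates to `1` over
`[0,1]^d`, (ii) has uniform margins: integrating out all coordinates except the `j`-th
(held at `u_j ∈ [0,1]`) gives `1`, and (iii) equals the constant `1` when `N = 0`. -/
theorem densEst_props (d n : ℕ) (hn : 0 < n) (x : Fin n → Fin d → ℝ) (N : Fin d → ℕ) :
    (∫ u, densEst d n x N u ∂cube d = 1)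
    ∧ (∀ (j : Fin d) (uj : ℝ), uj ∈ Set.Icc (0 : ℝ) 1 →
        ∫ v, densEst d n x N (Function.update v j uj) ∂cube d = 1)
    ∧ (N = 0 → ∀ u : Fin d → ℝ, densEst d n x N u = 1) := by
  refine ⟨?_, fun j uj _ => ?_, fun hN u => ?_⟩
  · simp only [densEst]
    rw [integral_finsetSum _ fun m _ =>
      (integrable_cube_prod (fun i => Q (m i)) fun i => Q_continuous _).const_mul _]
    simp only [integral_const_mul, Qd, integral_cube_prod (fun i => Q _), integral_Q]
    refine sum_multiIndex N _ (by simp [rhoHat_zero]) fun m hm => ?_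
    obtain ⟨i, hi⟩ := Function.ne_iff.1 hm
    rw [Finset.prod_eq_zero (Finset.mem_univ i) (if_neg hi), mul_zero]
  · simp only [densEst, Qd_update]
    rw [integral_finsetSum _ fun m _ => (integrable_cube_prod
      (fun i => if i = j then fun _ => Q (m j) uj else Q (m i)) fun i => by
        split_ifs
        · exact continuous_const
        · exact Q_continuous _).const_mul _]
    simp only [integral_const_mul]
    refine sum_multiIndex N _ ?_ fun m hm => ?_
    · simp only [Pi.zero_apply]
      rw [integral_cube_prod (fun i => if i = j then fun _ => Q 0 uj else Q 0), rhoHat_zero,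
        one_mul]
      refine Finset.prod_eq_one fun i _ => ?_
      split_ifs <;> simp [Q_zero]
    · by_cases hj : ∀ i, i ≠ j → m i = 0
      · rw [rhoHat_eq_zero_of_single x hm hj, zero_mul]
      · push Not at hj
        obtain ⟨i, hij, hi⟩ := hj
        rw [integral_cube_prod (fun i => if i = j then fun _ => Q (m j) uj else Q (m i)),
          Finset.prod_eq_zero (Finset.mem_univ i) (by simp [hij, integral_Q, hi]), mul_zero]
  · subst hN
    rw [densEst, Finset.sum_eq_single 0]
    · simp [rhoHat_zero, Qd, Q_zero]
    · intro m hm hm0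
      refine absurd (funext fun i => ?_) hm0
      simpa using Fintype.mem_piFinset.1 hm i
    · exact fun h => absurd (Fintype.mem_piFinset.2 fun i => by simp) h
end

section
/- For every m = (m_1,…,m_d) ∈ ℕ^d and all x, y ∈ [0,1]^d, | ∏_{j=1}^d Q_{m_j}(x_j) − ∏_{j=1}^d Q_{m_j}(y_j) | ≤ 2√3 · 3^{(d−1)/2} · ( ∏_{j=1}^d max(m_j,1) )^{1/2} · ( max_{1≤j≤d} m_j )² · Σ_{j=1}^d |x_j − y_j|. -/
/-!
The derivative of the Legendre polynomial `L_n` is the sequence `D_n` given by `D_0 = 0`,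
`D_{n+1} = x D_n + (n+1) L_n`, and `(n+1) L_{n+1} = (n+1) x L_n - (1-x²) D_n`. For `|x| ≤ 1`,
put `s = √(1-x²)`. These two identities say that `(L_{n+1}, s D_{n+1}/(n+1))` is the image of
`(L_n, s D_n/(n+1))` under the rotation with cosine `x` and sine `s`. As the denominator only
grows from one step to the next, the energy `L_n² + (1-x²) D_n²/(n+1)²` is nonincreasing in `n`;
it equals `1` at `n = 0`, so `|L_n| ≤ 1` on `[-1,1]`. The recursion for `D_n` then yields
`|L_n'| ≤ n(n+1)/2`, and the mean value inequality gives a Lipschitz bound for each `Q_m`.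

With `B_j = √3 · √max(m_j,1)`, which bounds `|Q_{m_j}|` on `[0,1]`, the Lipschitz constant of
`Q_{m_j}` is at most `2 (max m)² B_j`. Replacing the factors of the product one at a time gives
the constant `2 (max m)² ∏ B_j`, and `∏ B_j = 3^{d/2} √(∏ max(m_j,1))`.
-/

open MeasureTheory Filter

/-- The derivative of the Legendre polynomial `legP n`, encoded through the recursion
`L_{n+1}' = x L_n' + (n+1) L_n`; see `hasDerivAt_legP`. -/
noncomputable def legD : ℕ → ℝ → ℝ
  | 0, _ => 0
  | n + 1, x => x * legD n x + ((n : ℝ) + 1) * legP n x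

lemma legP_succ_eq (n : ℕ) (x : ℝ) :
    ((n : ℝ) + 1) * legP (n + 1) x = ((n : ℝ) + 1) * x * legP n x - (1 - x ^ 2) * legD n x := by
  induction n with
  | zero => simp [legP, legD]
  | succ n ih =>
    have h : ((n : ℝ) + 2) * legP (n + 2) x =
        (2 * (n : ℝ) + 3) * x * legP (n + 1) x - ((n : ℝ) + 1) * legP n x := by
      rw [legP]
      field_simp
    rw [legD]
    push_cast
    linear_combination h + x * ih

lemma hasDerivAt_legP (n : ℕ) (x : ℝ) : HasDerivAt (legP n) (legD n x) x := by
  induction n using Nat.twoStepInduction with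
  | zero =>
    have h : legP 0 = fun _ => (1 : ℝ) := by funext t; simp [legP]
    rw [h]
    simpa [legD] using hasDerivAt_const x (1 : ℝ)
  | one =>
    have h : legP 1 = fun t => t := by funext t; simp [legP]
    rw [h]
    simpa [legD, legP] using hasDerivAt_id' x
  | more n ih0 ih1 =>
    have h : legP (n + 2) = fun t =>
        ((2 * (n : ℝ) + 3) * t * legP (n + 1) t - ((n : ℝ) + 1) * legP n t) / ((n : ℝ) + 2) := by
      funext t; rw [legP]
    rw [h]
    refine HasDerivAt.congr_deriv (((((hasDerivAt_id' x).const_mul (2 * (n : ℝ) + 3)).mul ih1).sub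
      (ih0.const_mul ((n : ℝ) + 1))).div_const ((n : ℝ) + 2)) ?_
    have hn : (n : ℝ) + 2 ≠ 0 := by positivity
    have hD1 : legD (n + 1) x = x * legD n x + ((n : ℝ) + 1) * legP n x := rfl
    have hD2 : legD (n + 2) x = x * legD (n + 1) x + (((n + 1 : ℕ) : ℝ) + 1) * legP (n + 1) x := rfl
    rw [div_eq_iff hn, hD2, hD1]
    push_cast
    linear_combination (-((n : ℝ) + 1)) * legP_succ_eq n x

/-- The energy bound: passing from `n` to `n + 1` rotates `(L_n, s D_n/(n+1))`, and
replacing the denominator `n + 1` by `n + 2` can only shrink the second component. -/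
lemma legP_energy {x : ℝ} (hx : x ^ 2 ≤ 1) (n : ℕ) :
    legP n x ^ 2 + (1 - x ^ 2) * (legD n x / ((n : ℝ) + 1)) ^ 2 ≤ 1 := by
  induction n with
  | zero => simp [legP, legD]
  | succ n ih =>
    have hn : (n : ℝ) + 1 ≠ 0 := by positivity
    have hP : legP (n + 1) x = x * legP n x - (1 - x ^ 2) * (legD n x / ((n : ℝ) + 1)) := by
      have h := legP_succ_eq n x
      field_simp
      linear_combination h
    have hD : legD (n + 1) x / ((n : ℝ) + 1) = x * (legD n x / ((n : ℝ) + 1)) + legP n x := by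
      rw [legD]
      field_simp
    have hrot : legP (n + 1) x ^ 2 + (1 - x ^ 2) * (legD (n + 1) x / ((n : ℝ) + 1)) ^ 2 ≤ 1 := by
      rw [hP, hD]
      linear_combination ih
    have hshrink : (legD (n + 1) x / (((n + 1 : ℕ) : ℝ) + 1)) ^ 2 ≤
        (legD (n + 1) x / ((n : ℝ) + 1)) ^ 2 := by
      rw [div_pow, div_pow]
      push_cast
      gcongr
      linarith
    have := mul_le_mul_of_nonneg_left hshrink (sub_nonneg.2 hx)
    linarith

lemma abs_legP_le {x : ℝ} (hx : x ^ 2 ≤ 1) (n : ℕ) : |legP n x| ≤ 1 := by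
  rw [← sq_le_one_iff_abs_le_one]
  have h := legP_energy hx n
  have := mul_nonneg (sub_nonneg.2 hx) (sq_nonneg (legD n x / ((n : ℝ) + 1)))
  linarith

lemma abs_legD_le {x : ℝ} (hx : x ^ 2 ≤ 1) (n : ℕ) :
    |legD n x| ≤ (n : ℝ) * ((n : ℝ) + 1) / 2 := by
  induction n with
  | zero => simp [legD]
  | succ n ih =>
    have hx' : |x| ≤ 1 := (sq_le_one_iff_abs_le_one x).1 hx
    have hn : (0 : ℝ) ≤ (n : ℝ) + 1 := by positivity
    rw [legD]
    calc |x * legD n x + ((n : ℝ) + 1) * legP n x|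
        ≤ |x| * |legD n x| + ((n : ℝ) + 1) * |legP n x| := by
          refine (abs_add_le _ _).trans_eq ?_
          rw [abs_mul, abs_mul, abs_of_nonneg hn]
      _ ≤ 1 * ((n : ℝ) * ((n : ℝ) + 1) / 2) + ((n : ℝ) + 1) * 1 := by
          gcongr
          exact abs_legP_le hx n
      _ = ((n + 1 : ℕ) : ℝ) * (((n + 1 : ℕ) : ℝ) + 1) / 2 := by push_cast; ring

lemma abs_legP_sub_le (n : ℕ) {x y : ℝ} (hx : x ∈ Set.Icc (-1 : ℝ) 1)
    (hy : y ∈ Set.Icc (-1 : ℝ) 1) :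
    |legP n x - legP n y| ≤ (n : ℝ) * ((n : ℝ) + 1) / 2 * |x - y| := by
  have h := (convex_Icc (-1 : ℝ) 1).norm_image_sub_le_of_norm_hasDerivWithin_le
    (f := legP n) (f' := legD n) (C := (n : ℝ) * ((n : ℝ) + 1) / 2)
    (fun t _ => (hasDerivAt_legP n t).hasDerivWithinAt)
    (fun t ht => abs_legD_le (by nlinarith [ht.1, ht.2]) n) hy hx
  simpa only [Real.norm_eq_abs] using h

lemma sqrt_two_mul_add_one_le (m : ℕ) :
    √(2 * (m : ℝ) + 1) ≤ √3 * √((max m 1 : ℕ) : ℝ) := by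
  rw [← Real.sqrt_mul (by norm_num)]
  apply Real.sqrt_le_sqrt
  have h : 2 * m + 1 ≤ 3 * max m 1 := by omega
  exact_mod_cast h

lemma abs_Q_le (m : ℕ) {u : ℝ} (hu : u ∈ Set.Icc (0 : ℝ) 1) :
    |Q m u| ≤ √3 * √((max m 1 : ℕ) : ℝ) := by
  rw [Q, abs_mul, abs_of_nonneg (Real.sqrt_nonneg _)]
  have h : |legP m (2 * u - 1)| ≤ 1 := abs_legP_le (by nlinarith [hu.1, hu.2]) m
  exact (mul_le_of_le_one_right (Real.sqrt_nonneg _) h).trans (sqrt_two_mul_add_one_le m)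

/-- The Lipschitz bound in terms of an upper bound `M` for the degree. For `m = 0` the left side
vanishes, so `M = 0` is allowed. -/
lemma abs_Q_sub_le {m M : ℕ} (hM : m ≤ M) {u v : ℝ} (hu : u ∈ Set.Icc (0 : ℝ) 1)
    (hv : v ∈ Set.Icc (0 : ℝ) 1) :
    |Q m u - Q m v| ≤ 2 * (M : ℝ) ^ 2 * (√3 * √((max m 1 : ℕ) : ℝ)) * |u - v| := by
  have h := abs_legP_sub_le m (x := 2 * u - 1) (y := 2 * v - 1)
    ⟨by linarith [hu.1], by linarith [hu.2]⟩ ⟨by linarith [hv.1], by linarith [hv.2]⟩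
  have huv : |2 * u - 1 - (2 * v - 1)| = 2 * |u - v| := by
    rw [show 2 * u - 1 - (2 * v - 1) = 2 * (u - v) by ring, abs_mul, abs_two]
  rw [huv] at h
  have hm : (m : ℝ) * ((m : ℝ) + 1) ≤ 2 * (M : ℝ) ^ 2 := by
    have h1 : m * (m + 1) ≤ 2 * M ^ 2 := by
      have : m ≤ m ^ 2 := Nat.le_self_pow two_ne_zero m
      have : m ^ 2 ≤ M ^ 2 := Nat.pow_le_pow_left hM 2
      linarith [show m * (m + 1) = m ^ 2 + m by ring]
    exact_mod_cast h1
  rw [Q, Q, ← mul_sub, abs_mul, abs_of_nonneg (Real.sqrt_nonneg _)]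
  calc √(2 * (m : ℝ) + 1) * |legP m (2 * u - 1) - legP m (2 * v - 1)|
      ≤ (√3 * √((max m 1 : ℕ) : ℝ)) * (2 * (M : ℝ) ^ 2 * |u - v|) := by
        refine mul_le_mul (sqrt_two_mul_add_one_le m) ?_ (abs_nonneg _) (by positivity)
        refine h.trans ?_
        have := mul_le_mul_of_nonneg_right hm (abs_nonneg (u - v))
        linarith
    _ = _ := by ring

/-- Telescoping bound for a difference of products whose factors are bounded by `B i` and differ
by at most `C * B i * δ i`; no division by `B i` is needed in this form. -/
lemma abs_prod_sub_prod_le {ι : Type*} (s : Finset ι) (a b B δ : ι → ℝ) (C : ℝ)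
    (ha : ∀ i, |a i| ≤ B i) (hb : ∀ i, |b i| ≤ B i)
    (hab : ∀ i, |a i - b i| ≤ C * B i * δ i) :
    |∏ i ∈ s, a i - ∏ i ∈ s, b i| ≤ C * (∏ i ∈ s, B i) * ∑ i ∈ s, δ i := by
  classical
  induction s using Finset.induction_on with
  | empty => simp
  | insert j s hj ih =>
    rw [Finset.prod_insert hj, Finset.prod_insert hj, Finset.prod_insert hj, Finset.sum_insert hj]
    have hA : |∏ i ∈ s, a i| ≤ ∏ i ∈ s, B i := by
      rw [Finset.abs_prod]
      exact Finset.prod_le_prod (fun i _ => abs_nonneg _) fun i _ => ha i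
    calc |a j * ∏ i ∈ s, a i - b j * ∏ i ∈ s, b i|
        = |(a j - b j) * ∏ i ∈ s, a i + b j * (∏ i ∈ s, a i - ∏ i ∈ s, b i)| := by
          congr 1; ring
      _ ≤ |a j - b j| * |∏ i ∈ s, a i| + |b j| * |∏ i ∈ s, a i - ∏ i ∈ s, b i| := by
          refine (abs_add_le _ _).trans_eq ?_
          rw [abs_mul, abs_mul]
      _ ≤ (C * B j * δ j) * ∏ i ∈ s, B i + B j * (C * (∏ i ∈ s, B i) * ∑ i ∈ s, δ i) :=
          add_le_add
            (mul_le_mul (hab j) hA (abs_nonneg _) ((abs_nonneg _).trans (hab j)))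
            (mul_le_mul (hb j) ih (abs_nonneg _) ((abs_nonneg _).trans (hb j)))
      _ = _ := by ring

/-- Lipschitz-type bound for tensor products of shifted Legendre
polynomials: for `x, y ∈ [0,1]^d`,
`|∏_j Q_{m_j}(x_j) - ∏_j Q_{m_j}(y_j)|
  ≤ 2√3 · 3^{(d-1)/2} · (∏_j max(m_j,1))^{1/2} · (max_j m_j)² · Σ_j |x_j - y_j|`. -/
theorem tensor_legendre_lipschitz (d : ℕ) (m : Fin d → ℕ) (x y : Fin d → ℝ)
    (hx : ∀ j, x j ∈ Set.Icc (0 : ℝ) 1) (hy : ∀ j, y j ∈ Set.Icc (0 : ℝ) 1) :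
    |(∏ j, Q (m j) (x j)) - ∏ j, Q (m j) (y j)|
      ≤ 2 * Real.sqrt 3 * (3 : ℝ) ^ (((d : ℝ) - 1) / 2)
          * Real.sqrt (∏ j, ((max (m j) 1 : ℕ) : ℝ))
          * (((Finset.univ.sup m : ℕ) : ℝ)) ^ 2
          * ∑ j, |x j - y j| := by
  have h := abs_prod_sub_prod_le Finset.univ (fun j => Q (m j) (x j)) (fun j => Q (m j) (y j))
    (fun j => √3 * √((max (m j) 1 : ℕ) : ℝ)) (fun j => |x j - y j|)
    (2 * ((Finset.univ.sup m : ℕ) : ℝ) ^ 2)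
    (fun j => abs_Q_le _ (hx j)) (fun j => abs_Q_le _ (hy j))
    (fun j => abs_Q_sub_le (Finset.le_sup (Finset.mem_univ j)) (hx j) (hy j))
  have h3 : √3 * (3 : ℝ) ^ (((d : ℝ) - 1) / 2) = √3 ^ d := by
    rw [Real.sqrt_eq_rpow, ← Real.rpow_natCast, ← Real.rpow_mul (by norm_num),
      ← Real.rpow_add (by norm_num)]
    congr 1
    ring
  have hB : ∏ j, (√3 * √((max (m j) 1 : ℕ) : ℝ)) =
      √3 ^ d * √(∏ j, ((max (m j) 1 : ℕ) : ℝ)) := by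
    rw [Finset.prod_mul_distrib, Finset.prod_const, Finset.card_univ, Fintype.card_fin,
      Real.sqrt_prod _ fun j _ => Nat.cast_nonneg _]
  refine h.trans_eq ?_
  rw [hB, ← h3]
  ring
end
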